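/- arXiv:2505.01611 — 2 statements merged into one kernel-verified Lean document; each statement's English description precedes it below -/
import Mathlib

section
/- Write Ω = {(x, y) : x ∈ [a, b], φ₁(x) ≤ y ≤ φ₂(x)} with φ₁ convex and φ₂ concave on [a, b], and let u ∈ 𝒰_Ω. For a boundary point (x₀, y₀) ∈ ∂Ω that is an endpoint of a nondegenerate horizontal segment Ω ∩ {y = y₀}, define u_x(x₀, y₀) as the one-sided derivative of the concave function x ↦ u(x, y₀) at x₀ taken from inside the segment (it exists and is finite since the gradient of u is uniformly bounded). Then ess sup_{(x,y)∈Ω} |u_x(x, y)| = sup |u_x(x₀, y₀)|, the supremum being taken over all boundary points (x₀, y₀) ∈ ∂Ω at which u_x is so defined. The analogous statement holds with u_x replaced by u_y and horizontal segments replaced by vertical segments. -/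
open Set MeasureTheory
open scoped ENNReal

/-- Partial derivative of `u` in the `x` direction (junk value where `u` is not
differentiable). -/
noncomputable def ux (u : ℝ × ℝ → ℝ) (z : ℝ × ℝ) : ℝ := fderiv ℝ u z (1, 0)

/-- Partial derivative of `u` in the `y` direction. -/
noncomputable def uy (u : ℝ × ℝ → ℝ) (z : ℝ × ℝ) : ℝ := fderiv ℝ u z (0, 1)

/-- Directional derivative of `u` in the direction `h`. -/
noncomputable def uh (h : ℝ × ℝ) (u : ℝ × ℝ → ℝ) (z : ℝ × ℝ) : ℝ := fderiv ℝ u z h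

/-- The class `𝒰_Ω`: continuous concave functions on `Ω` vanishing on the boundary,
with uniformly bounded gradient over all interior points where it exists. -/
def MemU (Ω : Set (ℝ × ℝ)) (u : ℝ × ℝ → ℝ) : Prop :=
  ContinuousOn u Ω ∧ ConcaveOn ℝ Ω u ∧ (∀ z ∈ frontier Ω, u z = 0) ∧
    ∃ C : ℝ, ∀ z ∈ interior Ω, ∀ g : (ℝ × ℝ) →L[ℝ] ℝ, HasFDerivAt u g z → ‖g‖ ≤ C

/-- The `L¹` norm of `f` over `Ω`. -/
noncomputable def L1N (Ω : Set (ℝ × ℝ)) (f : ℝ × ℝ → ℝ) : ℝ := ∫ z in Ω, |f z|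

/-- The `L^p` norm of `f` over `Ω`, `p ∈ [1, ∞)`. -/
noncomputable def LpN (Ω : Set (ℝ × ℝ)) (p : ℝ) (f : ℝ × ℝ → ℝ) : ℝ :=
  (∫ z in Ω, |f z| ^ p) ^ (1 / p)

/-- The `L^∞` norm (essential supremum) of `f` over `Ω`. -/
noncomputable def LinfN (Ω : Set (ℝ × ℝ)) (f : ℝ × ℝ → ℝ) : ℝ≥0∞ :=
  essSup (fun z => ENNReal.ofReal |f z|) (volume.restrict Ω)

/-- The width of `Ω` parallel to the (Euclidean unit) vector `h`: the distance between the
two lines of support of `Ω` parallel to `h`, i.e. the oscillation over `Ω` of the linear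
functional given by the unit normal `(-h.2, h.1)` to `h`. -/
noncomputable def widthPar (Ω : Set (ℝ × ℝ)) (h : ℝ × ℝ) : ℝ :=
  sSup ((fun z : ℝ × ℝ => -h.2 * z.1 + h.1 * z.2) '' Ω) -
    sInf ((fun z : ℝ × ℝ => -h.2 * z.1 + h.1 * z.2) '' Ω)

section

open Filter Topology

/-- At a point of differentiability, a concave function lies below its tangent hyperplane. -/
theorem ConcaveOn.le_add_fderiv {E : Type*} [NormedAddCommGroup E] [NormedSpace ℝ E]
    {Ω : Set E} {u : E → ℝ} (hu : ConcaveOn ℝ Ω u) {w h : E} (hw : w ∈ Ω) (hwh : w + h ∈ Ω)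
    (hd : DifferentiableAt ℝ u w) : u (w + h) ≤ u w + fderiv ℝ u w h := by
  have hconc : ConcaveOn ℝ (AffineMap.lineMap w (w + h) ⁻¹' Ω)
      (u ∘ AffineMap.lineMap (k := ℝ) w (w + h)) := hu.comp_affineMap _
  have hder : HasDerivAt (u ∘ AffineMap.lineMap (k := ℝ) w (w + h)) (fderiv ℝ u w h) 0 := by
    have hline : HasDerivAt (AffineMap.lineMap (k := ℝ) w (w + h)) h 0 := by
      simpa using AffineMap.hasDerivAt_lineMap (a := w) (b := w + h) (x := (0 : ℝ))
    have hfd : HasFDerivAt u (fderiv ℝ u w) (AffineMap.lineMap (k := ℝ) w (w + h) 0) := by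
      simpa using hd.hasFDerivAt
    exact hfd.comp_hasDerivAt 0 hline
  have := hconc.slope_le_of_hasDerivAt (x := 0) (y := 1) (by simpa using hw)
    (by simpa using hwh) one_pos hder
  simp [slope_def_field] at this
  linarith

section Directional

variable {E : Type*} [NormedAddCommGroup E] [NormedSpace ℝ E] [FiniteDimensional ℝ E]
  [MeasurableSpace E] [BorelSpace E] {μ : Measure E} [μ.IsAddHaarMeasure]
  {Ω : Set E} {u : E → ℝ} {v : E} {M : ℝ}

/-- A property valid almost everywhere in `Ω` holds, together with differentiability of the
concave function `u`, on a dense set of interior points. -/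
theorem ConcaveOn.mem_closure_differentiableAt (hu : ConcaveOn ℝ Ω u) {p : E → Prop}
    (hp : ∀ᵐ z ∂μ.restrict Ω, p z) {z : E} (hz : z ∈ interior Ω) :
    z ∈ closure {w | w ∈ interior Ω ∧ DifferentiableAt ℝ u w ∧ p w} := by
  rw [mem_closure_iff_nhds]
  intro N hN
  obtain ⟨K, U, hU, hLip⟩ := hu.locallyLipschitzOn_interior hz
  rw [isOpen_interior.nhdsWithin_eq hz] at hU
  have hV : z ∈ interior (U ∩ interior Ω ∩ N) := mem_interior_iff_mem_nhds.2
    (inter_mem (inter_mem hU (isOpen_interior.mem_nhds hz)) hN)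
  have hVsub : interior (U ∩ interior Ω ∩ N) ⊆ U ∩ interior Ω ∩ N := interior_subset
  have hdiff := (hLip.mono fun x hx => (hVsub hx).1.1).ae_differentiableWithinAt_of_mem (μ := μ)
  have hpV : ∀ᵐ w ∂μ, w ∈ interior (U ∩ interior Ω ∩ N) → p w :=
    (ae_restrict_iff' isOpen_interior.measurableSet).1
      (ae_restrict_of_ae_restrict_of_subset
        (fun x hx => interior_subset (hVsub hx).1.2) hp)
  obtain ⟨w, hwV, hw⟩ := (Measure.dense_of_ae (hdiff.and hpV)).inter_open_nonempty _
    isOpen_interior ⟨z, hV⟩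
  exact ⟨w, (hVsub hwV).2, (hVsub hwV).1.2,
    (hw.1 hwV).differentiableAt (isOpen_interior.mem_nhds hwV), hw.2 hwV⟩

/-- An almost everywhere bound on a directional derivative of a concave function bounds its
increments in that direction between interior points. -/
theorem ConcaveOn.le_add_of_ae_abs_fderiv_le_of_interior (hu : ConcaveOn ℝ Ω u)
    (hM : ∀ᵐ z ∂μ.restrict Ω, |fderiv ℝ u z v| ≤ M) {z : E} {t : ℝ} (hz : z ∈ interior Ω)
    (hzt : z + t • v ∈ interior Ω) : u (z + t • v) ≤ u z + M * |t| := by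
  set G := {w | w ∈ interior Ω ∧ DifferentiableAt ℝ u w ∧ |fderiv ℝ u w v| ≤ M}
  have : NeBot (𝓝[G] z) :=
    mem_closure_iff_nhdsWithin_neBot.1 (hu.mem_closure_differentiableAt hM hz)
  have hcont : ∀ x ∈ interior Ω, ContinuousAt u x := fun x hx =>
    hu.continuousOn_interior.continuousAt (isOpen_interior.mem_nhds hx)
  have hshift : Tendsto (fun w : E => w + t • v) (𝓝 z) (𝓝 (z + t • v)) :=
    (continuous_id.add continuous_const).tendsto z
  have hleft : Tendsto (fun w => u (w + t • v)) (𝓝[G] z) (𝓝 (u (z + t • v))) :=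
    ((hcont _ hzt).tendsto.comp hshift).mono_left nhdsWithin_le_nhds
  have hright : Tendsto (fun w => u w + M * |t|) (𝓝[G] z) (𝓝 (u z + M * |t|)) :=
    ((hcont _ hz).tendsto.add_const _).mono_left nhdsWithin_le_nhds
  refine le_of_tendsto_of_tendsto hleft hright ?_
  filter_upwards [self_mem_nhdsWithin,
    nhdsWithin_le_nhds (hshift (isOpen_interior.mem_nhds hzt))] with w hw hwt
  have htangent := hu.le_add_fderiv (interior_subset hw.1) (interior_subset hwt) hw.2.1
  have hle : t * fderiv ℝ u w v ≤ M * |t| := by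
    calc t * fderiv ℝ u w v ≤ |t * fderiv ℝ u w v| := le_abs_self _
      _ = |fderiv ℝ u w v| * |t| := by rw [abs_mul, mul_comm]
      _ ≤ M * |t| := by gcongr; exact hw.2.2
  rw [map_smul, smul_eq_mul] at htangent
  linarith

/-- An almost everywhere bound on a directional derivative of a concave function bounds its
increments in that direction, up to the boundary. -/
theorem ConcaveOn.abs_sub_le_of_ae_abs_fderiv_le (hu : ConcaveOn ℝ Ω u) (huc : ContinuousOn u Ω)
    (hint : (interior Ω).Nonempty) (hM : ∀ᵐ z ∂μ.restrict Ω, |fderiv ℝ u z v| ≤ M)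
    {z : E} {t : ℝ} (hz : z ∈ Ω) (hzt : z + t • v ∈ Ω) : |u (z + t • v) - u z| ≤ M * |t| := by
  have key : ∀ {z : E} {t : ℝ}, z ∈ Ω → z + t • v ∈ Ω → u (z + t • v) ≤ u z + M * |t| := by
    intro z t hz hzt
    obtain ⟨p, hp⟩ := hint
    have hmem : ∀ x ∈ Ω, ∀ s ∈ Ioo (0 : ℝ) 1, (1 - s) • x + s • p ∈ interior Ω :=
      fun x hx s hs => hu.1.combo_self_interior_mem_interior hx hp (by linarith [hs.2]) hs.1
        (by ring)
    have hlim : ∀ x ∈ Ω, Tendsto (fun s : ℝ => u ((1 - s) • x + s • p)) (𝓝[>] 0) (𝓝 (u x)) := by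
      intro x hx
      refine (huc x hx).tendsto.comp (tendsto_nhdsWithin_iff.2 ⟨?_, ?_⟩)
      · have hc : Continuous fun s : ℝ => (1 - s) • x + s • p := by fun_prop
        simpa using (hc.tendsto 0).mono_left nhdsWithin_le_nhds
      · filter_upwards [Ioo_mem_nhdsGT (zero_lt_one' ℝ)] with s hs
        exact interior_subset (hmem x hx s hs)
    have hrhs : Tendsto (fun s : ℝ => u ((1 - s) • z + s • p) + M * |(1 - s) * t|) (𝓝[>] 0)
        (𝓝 (u z + M * |t|)) := by
      refine (hlim z hz).add ?_
      have hc : Continuous fun s : ℝ => M * |(1 - s) * t| := by fun_prop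
      simpa using (hc.tendsto 0).mono_left nhdsWithin_le_nhds
    refine le_of_tendsto_of_tendsto (hlim _ hzt) hrhs ?_
    filter_upwards [Ioo_mem_nhdsGT (zero_lt_one' ℝ)] with s hs
    have heq : (1 - s) • (z + t • v) + s • p = ((1 - s) • z + s • p) + ((1 - s) * t) • v := by
      module
    have hmem' := hmem _ hzt s hs
    rw [heq] at hmem' ⊢
    exact hu.le_add_of_ae_abs_fderiv_le_of_interior hM (hmem z hz s hs) hmem'
  have hback : z + t • v + (-t) • v = z := by module
  have hle := key hz hzt
  have hge := key (z := z + t • v) (t := -t) hzt (by rwa [hback])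
  rw [hback, abs_neg] at hge
  rw [abs_le]
  constructor <;> linarith

end Directional

/-- A Lipschitz concave function on a segment has a one-sided derivative at the left endpoint,
which dominates the derivatives inside. -/
theorem ConcaveOn.exists_hasDerivWithinAt_left {f : ℝ → ℝ} {a b t m K : ℝ}
    (hf : ConcaveOn ℝ (Icc a b) f) (hK : ∀ x ∈ Icc a b, ∀ y ∈ Icc a b, |f y - f x| ≤ K * |y - x|)
    (ht : t ∈ Ioo a b) (hm : HasDerivAt f m t) :
    ∃ d, HasDerivWithinAt f d (Icc a b) a ∧ m ≤ d := by
  have hab : a < b := ht.1.trans ht.2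
  have ha : a ∈ Icc a b := left_mem_Icc.2 hab.le
  have hanti : AntitoneOn (slope f a) (Ioo a b) :=
    (hf.antitoneOn_slope_gt ha).mono fun x hx => ⟨Ioo_subset_Icc_self hx, hx.1⟩
  have hbdd : BddBelow ((fun x => -slope f a x) '' Ioo a b) := by
    refine ⟨-K, ?_⟩
    rintro _ ⟨x, hx, rfl⟩
    have hpos : 0 < x - a := sub_pos.2 hx.1
    have hle := (le_abs_self _).trans (hK a ha x (Ioo_subset_Icc_self hx))
    rw [abs_of_pos hpos] at hle
    simp only [slope_def_field, neg_le_neg_iff]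
    rwa [div_le_iff₀ hpos]
  have hlim := (hanti.neg.tendsto_nhdsWithin_Ioo_right (nonempty_Ioo.2 hab) hbdd).neg
  simp only [neg_neg] at hlim
  refine ⟨_, hasDerivWithinAt_iff_tendsto_slope.2 (hlim.mono_left (nhdsWithin_mono _ ?_)), ?_⟩
  · exact fun x hx => lt_of_le_of_ne hx.1.1 (Ne.symm hx.2)
  · refine ge_of_tendsto hlim ?_
    filter_upwards [Ioo_mem_nhdsGT ht.1] with x hx
    calc m ≤ slope f a t :=
          hf.le_slope_of_hasDerivAt ha (Ioo_subset_Icc_self ht) ht.1 hm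
      _ ≤ slope f a x := hanti ⟨hx.1, hx.2.trans ht.2⟩ ht hx.2.le

/-- For a Lipschitz concave function on a segment, derivatives inside are dominated in absolute
value by the one-sided derivative at one of the endpoints. -/
theorem ConcaveOn.exists_hasDerivWithinAt_endpoint {f : ℝ → ℝ} {a b t m K : ℝ}
    (hf : ConcaveOn ℝ (Icc a b) f) (hK : ∀ x ∈ Icc a b, ∀ y ∈ Icc a b, |f y - f x| ≤ K * |y - x|)
    (ht : t ∈ Ioo a b) (hm : HasDerivAt f m t) :
    ∃ x d, (x = a ∨ x = b) ∧ HasDerivWithinAt f d (Icc a b) x ∧ |m| ≤ |d| := by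
  rcases le_total 0 m with h0 | h0
  · obtain ⟨d, hd, hmd⟩ := hf.exists_hasDerivWithinAt_left hK ht hm
    exact ⟨a, d, Or.inl rfl, hd, abs_le_abs_of_nonneg h0 hmd⟩
  · have hneg : ∀ x ∈ Icc (-b) (-a), -x ∈ Icc a b := fun x hx =>
      ⟨by linarith [hx.2], by linarith [hx.1]⟩
    have hg : ConcaveOn ℝ (Icc (-b) (-a)) fun x => f (-x) := by
      refine ⟨convex_Icc _ _, fun x hx y hy α β hα hβ hαβ => ?_⟩
      have := hf.2 (hneg x hx) (hneg y hy) hα hβ hαβ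
      simp only [smul_eq_mul] at this ⊢
      convert! this using 2
      ring
    have hgK : ∀ x ∈ Icc (-b) (-a), ∀ y ∈ Icc (-b) (-a),
        |f (-y) - f (-x)| ≤ K * |y - x| := by
      intro x hx y hy
      have := hK _ (hneg x hx) _ (hneg y hy)
      rwa [show -y - -x = -(y - x) by ring, abs_neg] at this
    have hgm : HasDerivAt (fun x => f (-x)) (-m) (-t) := by
      have hm' : HasDerivAt f m (-(-t)) := by rwa [neg_neg]
      simpa [Function.comp_def] using hm'.scomp (-t) (hasDerivAt_neg (-t))
    obtain ⟨d, hd, hmd⟩ := hg.exists_hasDerivWithinAt_left hgK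
      ⟨neg_lt_neg ht.2, neg_lt_neg ht.1⟩ hgm
    refine ⟨b, -d, Or.inr rfl, ?_, ?_⟩
    · have hmaps : MapsTo (fun x : ℝ => -x) (Icc a b) (Icc (-b) (-a)) := fun x hx =>
        ⟨neg_le_neg hx.2, neg_le_neg hx.1⟩
      have := hd.scomp b (hasDerivAt_neg b).hasDerivWithinAt hmaps
      simpa [Function.comp_def] using this
    · rw [abs_neg, ← abs_neg m]
      exact abs_le_abs_of_nonneg (by linarith) hmd

/-- A one-sided derivative of a Lipschitz function on a segment is bounded by the Lipschitz
constant. -/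
theorem HasDerivWithinAt.abs_le_of_abs_sub_le {f : ℝ → ℝ} {a b x d K : ℝ} (hab : a < b)
    (hx : x ∈ Icc a b) (hd : HasDerivWithinAt f d (Icc a b) x)
    (hK : ∀ y ∈ Icc a b, |f y - f x| ≤ K * |y - x|) : |d| ≤ K := by
  have : NeBot (𝓝[Icc a b \ {x}] x) := by
    rw [← accPt_principal_iff_nhdsWithin]
    exact (uniqueDiffOn_Icc hab x hx).accPt
  refine le_of_tendsto (hasDerivWithinAt_iff_tendsto_slope.1 hd).abs ?_
  filter_upwards [self_mem_nhdsWithin] with y hy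
  rw [slope_def_field, abs_div, div_le_iff₀ (abs_pos.2 (sub_ne_zero.2 hy.2))]
  exact hK y hy.1

section Sections

variable {Ω : Set (ℝ × ℝ)} {u : ℝ × ℝ → ℝ} {v : ℝ × ℝ} {ℓ : ℝ → ℝ × ℝ}

/-- One-sided derivatives of `u` at endpoints of sections of `Ω` in the direction `v` are bounded
by the essential supremum of the directional derivative. -/
theorem MemU.ofReal_abs_le_LinfN (hu : MemU Ω u) (hint : (interior Ω).Nonempty)
    (hℓ : ∀ t r, ℓ (t + r) = ℓ t + r • v) {x a b d : ℝ} (hab : a < b)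
    (hsec : {t : ℝ | ℓ t ∈ Ω} = Icc a b) (hx : x = a ∨ x = b)
    (hd : HasDerivWithinAt (fun t => u (ℓ t)) d (Icc a b) x) :
    ENNReal.ofReal |d| ≤ LinfN Ω (fun z => fderiv ℝ u z v) := by
  by_cases htop : LinfN Ω (fun z => fderiv ℝ u z v) = ⊤
  · rw [htop]
    exact le_top
  have hM : ∀ᵐ z ∂volume.restrict Ω,
      |fderiv ℝ u z v| ≤ (LinfN Ω (fun z => fderiv ℝ u z v)).toReal := by
    filter_upwards [ENNReal.ae_le_essSup (μ := volume.restrict Ω)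
      fun z => ENNReal.ofReal |fderiv ℝ u z v|] with z hz
    exact (ENNReal.ofReal_le_iff_le_toReal htop).1 hz
  have hmem : ∀ t ∈ Icc a b, ℓ t ∈ Ω := fun t ht => by rwa [← hsec] at ht
  have hxI : x ∈ Icc a b := by
    rcases hx with rfl | rfl
    exacts [left_mem_Icc.2 hab.le, right_mem_Icc.2 hab.le]
  refine (ENNReal.ofReal_le_iff_le_toReal htop).2 (hd.abs_le_of_abs_sub_le hab hxI ?_)
  intro y hy
  have heq : ℓ y = ℓ x + (y - x) • v := by rw [← hℓ, add_sub_cancel]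
  have hy' := hmem y hy
  simp only [heq] at hy' ⊢
  exact hu.2.1.abs_sub_le_of_ae_abs_fderiv_le hu.1 hint hM (hmem x hxI) hy'

/-- Almost every point of a convex set is an interior point. -/
theorem Convex.ae_restrict_mem_interior (hΩ : Convex ℝ Ω) :
    ∀ᵐ z ∂volume.restrict Ω, z ∈ interior Ω := by
  have hfront : ∀ᵐ z ∂volume.restrict Ω, z ∉ frontier Ω :=
    ae_restrict_of_ae (measure_eq_zero_iff_ae_notMem.1 (hΩ.addHaar_frontier volume))
  filter_upwards [hfront, ae_restrict_mem₀ (hΩ.nullMeasurableSet volume)] with z hz hzΩ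
  by_contra hzi
  exact hz ⟨subset_closure hzΩ, hzi⟩

/-- Directional derivatives of `u` are essentially bounded. -/
theorem MemU.exists_ae_abs_fderiv_le (hu : MemU Ω u) (v : ℝ × ℝ) :
    ∃ K : ℝ, ∀ᵐ z ∂volume.restrict Ω, |fderiv ℝ u z v| ≤ K := by
  obtain ⟨C, hC⟩ := hu.2.2.2
  refine ⟨max C 0 * ‖v‖, ?_⟩
  filter_upwards [hu.2.1.1.ae_restrict_mem_interior] with z hz
  by_cases hdiff : DifferentiableAt ℝ u z
  · refine ((fderiv ℝ u z).le_opNorm v).trans ?_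
    gcongr
    exact (hC z hz _ hdiff.hasFDerivAt).trans (le_max_left _ _)
  · rw [fderiv_zero_of_not_differentiableAt hdiff]
    simp only [zero_apply, abs_zero]
    positivity

theorem line_eq (hℓ : ∀ t r, ℓ (t + r) = ℓ t + r • v) : ℓ = fun s => ℓ 0 + s • v := by
  funext s
  rw [← hℓ, zero_add]

theorem continuous_line (hℓ : ∀ t r, ℓ (t + r) = ℓ t + r • v) : Continuous ℓ := by
  rw [line_eq hℓ]
  fun_prop

theorem combo_line (hℓ : ∀ t r, ℓ (t + r) = ℓ t + r • v) {x y α β : ℝ} (hαβ : α + β = 1) :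
    α • ℓ x + β • ℓ y = ℓ (α • x + β • y) := by
  rw [line_eq hℓ]
  simp only [smul_eq_mul]
  obtain rfl : β = 1 - α := by linarith
  module

/-- A section through an interior point of a compact convex set is a segment having that point in
its interior. -/
theorem Convex.exists_section_eq_Icc (hconv : Convex ℝ Ω) (hΩ : IsCompact Ω) (hv : v ≠ 0)
    (hℓ : ∀ t r, ℓ (t + r) = ℓ t + r • v) {t : ℝ} (ht : ℓ t ∈ interior Ω) :
    ∃ a b : ℝ, {s : ℝ | ℓ s ∈ Ω} = Icc a b ∧ t ∈ Ioo a b := by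
  have hcont : Continuous ℓ := continuous_line hℓ
  have hSconv : Convex ℝ {s : ℝ | ℓ s ∈ Ω} := by
    intro x hx y hy α β hα hβ hαβ
    have hmem := hconv hx hy hα hβ hαβ
    rwa [combo_line hℓ hαβ] at hmem
  have hScomp : IsCompact {s : ℝ | ℓ s ∈ Ω} := by
    refine Metric.isCompact_of_isClosed_isBounded (hΩ.isClosed.preimage hcont) ?_
    obtain ⟨R, hR⟩ := hΩ.isBounded.exists_norm_le
    refine isBounded_iff_forall_norm_le.2 ⟨(R + ‖ℓ 0‖) / ‖v‖, fun s hs => ?_⟩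
    rw [le_div_iff₀ (norm_pos_iff.2 hv), ← norm_smul]
    have heq : s • v = ℓ s - ℓ 0 := by
      rw [← zero_add s, hℓ, zero_add]
      abel
    rw [heq]
    exact (norm_sub_le _ _).trans (by gcongr; exact hR _ hs)
  have hSeq := eq_Icc_of_connected_compact
    (hSconv.isConnected ⟨t, interior_subset (s := Ω) ht⟩) hScomp
  refine ⟨_, _, hSeq, ?_⟩
  rw [← interior_Icc, ← hSeq]
  exact preimage_interior_subset_interior_preimage hcont ht

/-- The directional derivative of `u` at an interior point is dominated by a one-sided derivative
at an endpoint of the section through that point. -/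
theorem MemU.exists_endpoint (hu : MemU Ω u) (hΩ : IsCompact Ω) (hv : v ≠ 0)
    (hℓ : ∀ t r, ℓ (t + r) = ℓ t + r • v) {t : ℝ} (ht : ℓ t ∈ interior Ω)
    (hdiff : DifferentiableAt ℝ u (ℓ t)) :
    ∃ x a b d : ℝ, ℓ x ∈ frontier Ω ∧ a < b ∧ {s : ℝ | ℓ s ∈ Ω} = Icc a b ∧
      (x = a ∨ x = b) ∧ HasDerivWithinAt (fun s => u (ℓ s)) d (Icc a b) x ∧
      |fderiv ℝ u (ℓ t) v| ≤ |d| := by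
  obtain ⟨a, b, hsec, htab⟩ := hu.2.1.1.exists_section_eq_Icc hΩ hv hℓ ht
  have hab : a < b := htab.1.trans htab.2
  have hmem : ∀ s ∈ Icc a b, ℓ s ∈ Ω := fun s hs => by rwa [← hsec] at hs
  have hℓd : HasDerivAt ℓ v t := by
    rw [line_eq hℓ]
    simpa using ((hasDerivAt_id t).smul_const v).const_add (ℓ 0)
  have hcont : Continuous ℓ := continuous_line hℓ
  have hconc : ConcaveOn ℝ (Icc a b) fun s => u (ℓ s) := by
    refine ⟨convex_Icc a b, fun x hx y hy α β hα hβ hαβ => ?_⟩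
    have hle := hu.2.1.2 (hmem x hx) (hmem y hy) hα hβ hαβ
    rwa [combo_line hℓ hαβ] at hle
  obtain ⟨K, hK⟩ := hu.exists_ae_abs_fderiv_le v
  have hLip : ∀ x ∈ Icc a b, ∀ y ∈ Icc a b, |u (ℓ y) - u (ℓ x)| ≤ K * |y - x| := by
    intro x hx y hy
    have heq : ℓ y = ℓ x + (y - x) • v := by rw [← hℓ, add_sub_cancel]
    have hy' := hmem y hy
    rw [heq] at hy' ⊢
    exact hu.2.1.abs_sub_le_of_ae_abs_fderiv_le hu.1 ⟨_, ht⟩ hK (hmem x hx) hy'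
  obtain ⟨x, d, hx, hd, hle⟩ := hconc.exists_hasDerivWithinAt_endpoint hLip htab
    (hdiff.hasFDerivAt.comp_hasDerivAt t hℓd)
  refine ⟨x, a, b, d, ?_, hab, hsec, hx, hd, hle⟩
  have hxf : x ∈ frontier (ℓ ⁻¹' Ω) := by
    rw [show ℓ ⁻¹' Ω = Icc a b from hsec, frontier_Icc hab.le]
    exact hx
  exact hcont.frontier_preimage_subset Ω hxf

/-- The essential supremum of a directional derivative of `u` is at most `B`, provided `B` bounds
it at every interior point of differentiability. -/
theorem MemU.LinfN_fderiv_le (hu : MemU Ω u) {B : ℝ≥0∞}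
    (hB : ∀ z ∈ interior Ω, DifferentiableAt ℝ u z → ENNReal.ofReal |fderiv ℝ u z v| ≤ B) :
    LinfN Ω (fun z => fderiv ℝ u z v) ≤ B := by
  refine essSup_le_of_ae_le B ?_
  filter_upwards [hu.2.1.1.ae_restrict_mem_interior] with z hz
  by_cases hdiff : DifferentiableAt ℝ u z
  · exact hB z hz hdiff
  · simp [fderiv_zero_of_not_differentiableAt hdiff]

end Sections

end

/-- Lemma 4: the essential supremum of `|u_x|` over `Ω` equals the supremum
of the moduli of the one-sided derivatives of `x ↦ u(x, y₀)` at endpoints of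
nondegenerate horizontal sections of `Ω`, taken over all such boundary points; and
analogously for `u_y` with vertical sections. -/
theorem stmt_17 (a b : ℝ) (hab : a < b) (φ₁ φ₂ : ℝ → ℝ)
    (hφ₁ : ConvexOn ℝ (Icc a b) φ₁) (hφ₂ : ConcaveOn ℝ (Icc a b) φ₂)
    (hφle : ∀ x ∈ Icc a b, φ₁ x ≤ φ₂ x)
    (Ω : Set (ℝ × ℝ))
    (hΩ : Ω = {z : ℝ × ℝ | z.1 ∈ Icc a b ∧ z.2 ∈ Icc (φ₁ z.1) (φ₂ z.1)})
    (hΩc : IsCompact Ω) (hΩint : (interior Ω).Nonempty)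
    (u : ℝ × ℝ → ℝ) (hu : MemU Ω u) :
    LinfN Ω (ux u) = sSup {v : ℝ≥0∞ | ∃ x₀ y₀ a' b' d : ℝ,
        (x₀, y₀) ∈ frontier Ω ∧ a' < b' ∧ {x : ℝ | (x, y₀) ∈ Ω} = Icc a' b' ∧
        (x₀ = a' ∨ x₀ = b') ∧
        HasDerivWithinAt (fun x => u (x, y₀)) d (Icc a' b') x₀ ∧
        v = ENNReal.ofReal |d|} ∧
    LinfN Ω (uy u) = sSup {v : ℝ≥0∞ | ∃ x₀ y₀ c' d' d : ℝ,
        (x₀, y₀) ∈ frontier Ω ∧ c' < d' ∧ {y : ℝ | (x₀, y) ∈ Ω} = Icc c' d' ∧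
        (y₀ = c' ∨ y₀ = d') ∧
        HasDerivWithinAt (fun y => u (x₀, y)) d (Icc c' d') y₀ ∧
        v = ENNReal.ofReal |d|} := by
  have hx : ∀ y t r : ℝ, ((t + r, y) : ℝ × ℝ) = (t, y) + r • (1, 0) := by simp
  have hy : ∀ x t r : ℝ, ((x, t + r) : ℝ × ℝ) = (x, t) + r • (0, 1) := by simp
  constructor
  · apply le_antisymm
    · refine hu.LinfN_fderiv_le fun z hz hdiff => ?_
      obtain ⟨x, a', b', d, hfr, hab', hsec, hend, hd, hle⟩ :=
        hu.exists_endpoint (ℓ := fun t => (t, z.2)) hΩc (by simp) (hx z.2) hz hdiff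
      exact (ENNReal.ofReal_le_ofReal hle).trans
        (le_sSup ⟨x, z.2, a', b', d, hfr, hab', hsec, hend, hd, rfl⟩)
    · refine sSup_le ?_
      rintro _ ⟨x, y, a', b', d, -, hab', hsec, hend, hd, rfl⟩
      exact hu.ofReal_abs_le_LinfN hΩint (hx y) hab' hsec hend hd
  · apply le_antisymm
    · refine hu.LinfN_fderiv_le fun z hz hdiff => ?_
      obtain ⟨y, c', d', d, hfr, hcd', hsec, hend, hd, hle⟩ :=
        hu.exists_endpoint (ℓ := fun t => (z.1, t)) hΩc (by simp) (hy z.1) hz hdiff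
      exact (ENNReal.ofReal_le_ofReal hle).trans
        (le_sSup ⟨z.1, y, c', d', d, hfr, hcd', hsec, hend, hd, rfl⟩)
    · refine sSup_le ?_
      rintro _ ⟨x, y, c', d', d, -, hcd', hsec, hend, hd, rfl⟩
      exact hu.ofReal_abs_le_LinfN hΩint (hy x) hcd' hsec hend hd
end

section
/- Write Ω = {(x, y) : x ∈ [a, b], φ₁(x) ≤ y ≤ φ₂(x)} with φ₁ convex and φ₂ concave on [a, b]. Suppose both vertical lines of support of Ω are angular, i.e. φ₁(a) = φ₂(a), φ₁(b) = φ₂(b), and the one-sided derivatives φ₁'(a+), φ₂'(a+), φ₁'(b−), φ₂'(b−) are all finite. Let m = max{ |φ₁'(a+)|, |φ₂'(a+)|, |φ₁'(b−)|, |φ₂'(b−)| } (equivalently, m = max{|φ_i'(x)| : i ∈ {1,2}, x ∈ [a,b]}). Then K_∞(Ω) = sup{ ‖u_x‖_∞ / ‖u_y‖_∞ : u ∈ 𝒰_Ω, u ≢ 0 } = m; that is, ‖u_x‖_∞ ≤ m ‖u_y‖_∞ for every u ∈ 𝒰_Ω, and for every ε > 0 there exists a nonzero u ∈ 𝒰_Ω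 with ‖u_x‖_∞ ≥ (m − ε) ‖u_y‖_∞. -/
open Set MeasureTheory
open scoped ENNReal

open Filter Topology NNReal

/-- A concave function lies below its tangent hyperplane. -/
theorem ConcaveOn.le_add_of_hasFDerivAt {E : Type*} [NormedAddCommGroup E] [NormedSpace ℝ E]
    {s : Set E} {f : E → ℝ} (hf : ConcaveOn ℝ s f) {z w : E} {g : E →L[ℝ] ℝ} (hz : z ∈ s)
    (hw : w ∈ s) (hg : HasFDerivAt f g z) : f w ≤ f z + g (w - z) := by
  have ht := (hg.hasLineDerivAt (w - z)).tendsto_slope_zero_right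
  have hle : f w - f z ≤ g (w - z) := by
    refine ge_of_tendsto ht ?_
    filter_upwards [Ioo_mem_nhdsGT (zero_lt_one' ℝ)] with t ht
    have h := hf.2 hz hw (sub_nonneg.2 ht.2.le) ht.1.le (sub_add_cancel 1 t)
    have he : (1 - t) • z + t • w = z + t • (w - z) := by module
    rw [he] at h
    simp only [smul_eq_mul] at h ⊢
    rw [inv_mul_eq_div, le_div_iff₀ ht.1]
    linarith
  linarith

/-- An a.e. bound on a directional derivative of a concave function is a Lipschitz bound in that
direction. -/
theorem ConcaveOn.le_add_of_ae_abs_fderiv_le {E : Type*} [NormedAddCommGroup E] [NormedSpace ℝ E]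
    [FiniteDimensional ℝ E] [MeasurableSpace E] [BorelSpace E] {μ : Measure E}
    [μ.IsAddHaarMeasure] {s : Set E} {f : E → ℝ} (hf : ConcaveOn ℝ s f) (hfc : ContinuousOn f s)
    {v : E} {N : ℝ} (hN : ∀ᵐ z ∂μ.restrict s, |fderiv ℝ f z v| ≤ N) {w : E} {t : ℝ}
    (hw : w ∈ s) (hz : w + t • v ∈ interior s) : f (w + t • v) ≤ f w + N * |t| := by
  set G : Set E := {p | p ∈ interior s ∧ DifferentiableAt ℝ f p ∧ |fderiv ℝ f p v| ≤ N} with hG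
  have hwG : w ∈ closure G := by
    have hwi : w ∈ closure (interior s) := by
      rw [hf.1.closure_interior_eq_closure_of_nonempty_interior ⟨_, hz⟩]
      exact subset_closure hw
    rw [mem_closure_iff] at hwi ⊢
    intro V hV hwV
    obtain ⟨q, hqV, hqs⟩ := hwi V hV hwV
    obtain ⟨K, T, hT, hLip⟩ := hf.locallyLipschitzOn_interior hqs
    rw [isOpen_interior.nhdsWithin_eq hqs] at hT
    obtain ⟨B, hBsub, hBo, hqB⟩ := mem_nhds_iff.1
      (inter_mem (inter_mem hT (hV.mem_nhds hqV)) (isOpen_interior.mem_nhds hqs))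
    have hLipB : LipschitzOnWith K f B := hLip.mono fun p hp => (hBsub hp).1.1
    have hd := hLipB.ae_differentiableWithinAt_of_mem (μ := μ)
    have hN' : ∀ᵐ z ∂μ.restrict B, |fderiv ℝ f z v| ≤ N :=
      ae_restrict_of_ae_restrict_of_subset (fun p hp => interior_subset (hBsub hp).2) hN
    have hne : (ae (μ.restrict B)).NeBot := by
      rw [ae_neBot, Ne, Measure.restrict_eq_zero]
      exact (hBo.measure_pos μ ⟨q, hqB⟩).ne'
    obtain ⟨p, ⟨hp1, hp2⟩, hp3⟩ :=
      ((hN'.and (ae_restrict_of_ae hd)).and (ae_restrict_mem hBo.measurableSet)).exists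
    exact ⟨p, (hBsub hp3).1.2, (hBsub hp3).2,
      (hp2 hp3).differentiableAt (hBo.mem_nhds hp3), hp1⟩
  have hNB : (𝓝[G] w).NeBot := mem_closure_iff_nhdsWithin_neBot.1 hwG
  have hGs : G ⊆ s := fun p hp => interior_subset hp.1
  have htr : Tendsto (fun p => p + t • v) (𝓝[G] w) (𝓝 (w + t • v)) :=
    ((continuous_id.add continuous_const).tendsto w).mono_left nhdsWithin_le_nhds
  have h1 : Tendsto (fun p => f (p + t • v)) (𝓝[G] w) (𝓝 (f (w + t • v))) :=
    (hfc.continuousAt (mem_interior_iff_mem_nhds.1 hz)).tendsto.comp htr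
  have h2 : Tendsto (fun p => f p + N * |t|) (𝓝[G] w) (𝓝 (f w + N * |t|)) :=
    ((hfc w hw).mono hGs).tendsto.add tendsto_const_nhds
  refine le_of_tendsto_of_tendsto h1 h2 ?_
  filter_upwards [htr.eventually (isOpen_interior.mem_nhds hz), self_mem_nhdsWithin] with p hp hpG
  have h := hf.le_add_of_hasFDerivAt (hGs hpG) (interior_subset hp) hpG.2.1.hasFDerivAt
  rw [add_sub_cancel_left, map_smul, smul_eq_mul] at h
  have h3 : t * fderiv ℝ f p v ≤ N * |t| := by
    calc t * fderiv ℝ f p v ≤ |t * fderiv ℝ f p v| := le_abs_self _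
      _ = |fderiv ℝ f p v| * |t| := by rw [abs_mul, mul_comm]
      _ ≤ N * |t| := mul_le_mul_of_nonneg_right hpG.2.2 (abs_nonneg t)
  linarith

/-- A convex function on an interval with finite endpoint derivatives is Lipschitz. -/
theorem ConvexOn.lipschitzOnWith_of_hasDerivWithinAt {a b da db : ℝ} {φ : ℝ → ℝ}
    (hφ : ConvexOn ℝ (Icc a b) φ) (ha : HasDerivWithinAt φ da (Ici a) a)
    (hb : HasDerivWithinAt φ db (Iic b) b) {K : ℝ≥0} (hda : |da| ≤ K) (hdb : |db| ≤ K) :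
    LipschitzOnWith K φ (Icc a b) := by
  have key : ∀ x ∈ Icc a b, ∀ y ∈ Icc a b, x < y → |φ y - φ x| ≤ K * (y - x) := by
    intro x hx y hy hxy
    have haI : a ∈ Icc a b := ⟨le_rfl, hx.1.trans hx.2⟩
    have hbI : b ∈ Icc a b := ⟨hx.1.trans hx.2, le_rfl⟩
    have hay : a < y := hx.1.trans_lt hxy
    have hxb : x < b := hxy.trans_le hy.2
    have hlo : da ≤ (φ y - φ x) / (y - x) := by
      have h1 := hφ.le_slope_of_hasDerivWithinAt_Ioi haI hy hay (ha.mono Ioi_subset_Ici_self)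
      rw [slope_def_field] at h1
      rcases hx.1.eq_or_lt with rfl | hax
      · exact h1
      · exact h1.trans (hφ.secant_mono_aux3 haI hy hax hxy)
    have hhi : (φ y - φ x) / (y - x) ≤ db := by
      have h1 := hφ.slope_le_of_hasDerivWithinAt_Iio hx hbI hxb (hb.mono Iio_subset_Iic_self)
      rw [slope_def_field] at h1
      rcases hy.2.eq_or_lt with rfl | hyb
      · exact h1
      · exact (hφ.secant_mono_aux2 hx hbI hxy hyb).trans h1
    have hpos : 0 < y - x := sub_pos.2 hxy
    have h1 := (le_div_iff₀ hpos).1 hlo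
    have h2 := (div_le_iff₀ hpos).1 hhi
    have := abs_le.1 hda
    have := abs_le.1 hdb
    rw [abs_le]
    constructor <;> nlinarith
  refine LipschitzOnWith.of_dist_le_mul fun x hx y hy => ?_
  rw [Real.dist_eq, Real.dist_eq]
  rcases lt_trichotomy x y with h | rfl | h
  · rw [abs_sub_comm (φ x), abs_sub_comm x, abs_of_pos (sub_pos.2 h)]
    exact key x hx y hy h
  · simp
  · rw [abs_of_pos (sub_pos.2 h)]
    exact key y hy x hx h

/-- A continuous convex function on an interval whose increments are locally bounded by `K` is
`K`-Lipschitz. -/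
theorem ConvexOn.lipschitzOnWith_of_eventually_abs_sub_le {a b : ℝ} (hab : a < b) {φ : ℝ → ℝ}
    (hφ : ConvexOn ℝ (Icc a b) φ) (hc : ContinuousOn φ (Icc a b)) {K : ℝ≥0}
    (hloc : ∀ x ∈ Ioo a b, ∀ᶠ y in 𝓝 x, |φ y - φ x| ≤ K * |y - x|) :
    LipschitzOnWith K φ (Icc a b) := by
  have right : ∀ x ∈ Ioo a b, ∀ y ∈ Ioc a b, x < y →
      ∃ w ∈ Ioo x y, |(φ w - φ x) / (w - x)| ≤ K := by
    intro x hx y hy hxy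
    obtain ⟨w, hw, hwI⟩ :=
      (((hloc x hx).filter_mono nhdsWithin_le_nhds).and (Ioo_mem_nhdsGT hxy)).exists
    refine ⟨w, hwI, ?_⟩
    have hpos : 0 < |w - x| := abs_pos.2 (sub_pos.2 hwI.1).ne'
    rwa [abs_div, div_le_iff₀ hpos]
  have key : ∀ x ∈ Ioo a b, ∀ y ∈ Ioo a b, x < y → |φ y - φ x| ≤ K * (y - x) := by
    intro x hx y hy hxy
    have hxI := Ioo_subset_Icc_self hx
    have hyI := Ioo_subset_Icc_self hy
    obtain ⟨w, hw, hwK⟩ := right x hx y ⟨hy.1, hy.2.le⟩ hxy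
    obtain ⟨w', hw', hwK'⟩ := right y hy b ⟨hab, le_rfl⟩ hy.2
    have h1 := hφ.secant_mono_aux2 hxI hyI hw.1 hw.2
    have h2 := hφ.slope_mono_adjacent hxI ⟨hyI.1.trans hw'.1.le, hw'.2.le⟩ hxy hw'.1
    have hpos : 0 < y - x := sub_pos.2 hxy
    have h3 := (le_div_iff₀ hpos).1 ((abs_le.1 hwK).1.trans h1)
    have h4 := (div_le_iff₀ hpos).1 (h2.trans (abs_le.1 hwK').2)
    rw [abs_le]
    constructor <;> linarith
  rw [← closure_Ioo hab.ne] at hc ⊢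
  rw [lipschitzOnWith_closure_iff hc]
  refine LipschitzOnWith.of_dist_le_mul fun x hx y hy => ?_
  rw [Real.dist_eq, Real.dist_eq]
  rcases lt_trichotomy x y with h | rfl | h
  · rw [abs_sub_comm (φ x), abs_sub_comm x, abs_of_pos (sub_pos.2 h)]
    exact key x hx y hy h
  · simp
  · rw [abs_of_pos (sub_pos.2 h)]
    exact key y hy x hx h

theorem HasDerivWithinAt.abs_le_of_lipschitzOnWith {s t : Set ℝ} {x d : ℝ} {φ : ℝ → ℝ} {K : ℝ≥0}
    (h : HasDerivWithinAt φ d s x) (hL : LipschitzOnWith K φ t) (hx : x ∈ t)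
    (ht : t ∈ 𝓝[s] x) [(𝓝[s \ {x}] x).NeBot] : |d| ≤ K := by
  rw [hasDerivWithinAt_iff_tendsto_slope] at h
  refine le_of_tendsto h.abs ?_
  filter_upwards [nhdsWithin_mono x sdiff_subset ht, self_mem_nhdsWithin] with y hy hys
  have hpos : 0 < |y - x| := abs_pos.2 (sub_ne_zero.2 hys.2)
  rw [slope_def_field, abs_div, div_le_iff₀ hpos]
  exact hL.dist_le_mul y hy x hx

/-- The points over `[a, b]` between the graphs of `φ₁` and `φ₂`. -/
def graphRegion (a b : ℝ) (φ₁ φ₂ : ℝ → ℝ) : Set (ℝ × ℝ) :=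
  {z | z.1 ∈ Icc a b ∧ z.2 ∈ Icc (φ₁ z.1) (φ₂ z.1)}

section GraphRegion

variable {a b : ℝ} {φ₁ φ₂ : ℝ → ℝ}

theorem mem_interior_graphRegion (h₁ : ContinuousOn φ₁ (Icc a b))
    (h₂ : ContinuousOn φ₂ (Icc a b)) {z : ℝ × ℝ} (hz : z.1 ∈ Ioo a b) (hz₁ : φ₁ z.1 < z.2)
    (hz₂ : z.2 < φ₂ z.1) : z ∈ interior (graphRegion a b φ₁ φ₂) := by
  have hI := Icc_mem_nhds hz.1 hz.2
  have hf : Tendsto Prod.fst (𝓝 z) (𝓝 z.1) := continuous_fst.tendsto z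
  have hs : Tendsto Prod.snd (𝓝 z) (𝓝 z.2) := continuous_snd.tendsto z
  have e₁ := ((h₁.continuousAt hI).tendsto.comp hf).eventually_lt hs hz₁
  have e₂ := hs.eventually_lt ((h₂.continuousAt hI).tendsto.comp hf) hz₂
  rw [mem_interior_iff_mem_nhds]
  filter_upwards [e₁, e₂, hf hI] with p hp₁ hp₂ hp
  exact ⟨hp, hp₁.le, hp₂.le⟩

theorem lt_of_mem_interior_graphRegion {z : ℝ × ℝ} (hz : z ∈ interior (graphRegion a b φ₁ φ₂)) :
    φ₁ z.1 < z.2 ∧ z.2 < φ₂ z.1 := by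
  have hn := mem_interior_iff_mem_nhds.1 hz
  have hc : Tendsto (fun y : ℝ => (z.1, y)) (𝓝 z.2) (𝓝 z) :=
    (continuous_const.prodMk continuous_id).tendsto z.2
  have he : ∀ᶠ y in 𝓝 z.2, (z.1, y) ∈ graphRegion a b φ₁ φ₂ := hc hn
  constructor
  · obtain ⟨y, hy, hlt⟩ := ((he.filter_mono nhdsWithin_le_nhds).and
      (self_mem_nhdsWithin : Iio z.2 ∈ 𝓝[<] z.2)).exists
    exact hy.2.1.trans_lt hlt
  · obtain ⟨y, hy, hlt⟩ := ((he.filter_mono nhdsWithin_le_nhds).and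
      (self_mem_nhdsWithin : Ioi z.2 ∈ 𝓝[>] z.2)).exists
    exact lt_of_lt_of_le hlt hy.2.2

theorem convex_graphRegion (hφ₁ : ConvexOn ℝ (Icc a b) φ₁) (hφ₂ : ConcaveOn ℝ (Icc a b) φ₂) :
    Convex ℝ (graphRegion a b φ₁ φ₂) := by
  intro z hz w hw s t hs ht hst
  refine ⟨hφ₁.1 hz.1 hw.1 hs ht hst, ?_, ?_⟩
  · exact (hφ₁.2 hz.1 hw.1 hs ht hst).trans (add_le_add
      (mul_le_mul_of_nonneg_left hz.2.1 hs) (mul_le_mul_of_nonneg_left hw.2.1 ht))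
  · exact (add_le_add (mul_le_mul_of_nonneg_left hz.2.2 hs)
      (mul_le_mul_of_nonneg_left hw.2.2 ht)).trans (hφ₂.2 hz.1 hw.1 hs ht hst)

/-- The horizontal line through an interior point meets one of the bounding graphs on either side,
provided the graphs meet above the endpoint `e`. -/
theorem exists_horizontal_mem_graph (h₁ : ContinuousOn φ₁ (Icc a b))
    (h₂ : ContinuousOn φ₂ (Icc a b)) {e : ℝ} (he : e ∈ Icc a b) (heq : φ₁ e = φ₂ e) {z : ℝ × ℝ}
    (hz : z.1 ∈ Icc a b) (hz₁ : φ₁ z.1 < z.2) (hz₂ : z.2 < φ₂ z.1) :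
    ∃ x ∈ uIcc e z.1, x ≠ z.1 ∧ (φ₁ x = z.2 ∨ φ₂ x = z.2) := by
  have hsub : uIcc e z.1 ⊆ Icc a b := uIcc_subset_Icc he hz
  rcases le_total z.2 (φ₁ e) with h | h
  · obtain ⟨x, hx, hxy⟩ := intermediate_value_uIcc (h₁.mono hsub) (mem_uIcc.2 (Or.inr ⟨hz₁.le, h⟩))
    refine ⟨x, hx, ?_, Or.inl hxy⟩
    rintro rfl
    exact hz₁.ne hxy
  · rw [heq] at h
    obtain ⟨x, hx, hxy⟩ := intermediate_value_uIcc (h₂.mono hsub) (mem_uIcc.2 (Or.inl ⟨h, hz₂.le⟩))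
    refine ⟨x, hx, ?_, Or.inr hxy⟩
    rintro rfl
    exact hz₂.ne' hxy

/-- The value of `u` at an interior point is controlled by the horizontal distance to the
boundary. -/
theorem MemU.exists_horizontal_zero (hφle : ∀ x ∈ Icc a b, φ₁ x ≤ φ₂ x) {K : ℝ≥0}
    (h₁ : LipschitzOnWith K φ₁ (Icc a b)) (h₂ : LipschitzOnWith K φ₂ (Icc a b))
    {u : ℝ × ℝ → ℝ} (hu : MemU (graphRegion a b φ₁ φ₂) u) {M : ℝ≥0}
    (hM : ∀ᵐ z ∂volume.restrict (graphRegion a b φ₁ φ₂), |uy u z| ≤ M)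
    {e : ℝ} (he : e ∈ Icc a b) (heq : φ₁ e = φ₂ e) {z : ℝ × ℝ}
    (hz : z ∈ interior (graphRegion a b φ₁ φ₂)) :
    ∃ x ∈ uIcc e z.1, x ≠ z.1 ∧ (x, z.2) ∈ graphRegion a b φ₁ φ₂ ∧ u (x, z.2) = 0 ∧
      u z ≤ M * (K * |x - z.1|) := by
  have hzR := interior_subset hz
  obtain ⟨hz₁, hz₂⟩ := lt_of_mem_interior_graphRegion hz
  obtain ⟨x, hx, hne, hgr⟩ :=
    exists_horizontal_mem_graph h₁.continuousOn h₂.continuousOn he heq hzR.1 hz₁ hz₂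
  have hxI : x ∈ Icc a b := uIcc_subset_Icc he hzR.1 hx
  have hle := hφle x hxI
  have zero : ∀ w ∈ graphRegion a b φ₁ φ₂, (φ₁ w.1 = w.2 ∨ φ₂ w.1 = w.2) → u w = 0 := by
    intro w hw hor
    refine hu.2.2.1 w ⟨subset_closure hw, fun hi => ?_⟩
    have := lt_of_mem_interior_graphRegion hi
    rcases hor with h | h <;> linarith [this.1, this.2]
  have vert : ∀ y, (z.1, y) ∈ graphRegion a b φ₁ φ₂ → u (z.1, y) = 0 → u z ≤ M * |z.2 - y| := by
    intro y hy hy0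
    have hzy : (z.1, y) + (z.2 - y) • ((0, 1) : ℝ × ℝ) = z := by ext <;> simp
    have h := hu.2.1.le_add_of_ae_abs_fderiv_le hu.1 hM hy (t := z.2 - y) (by rwa [hzy])
    rwa [hzy, hy0, zero_add] at h
  have hleM : ∀ {c : ℝ}, |z.2 - c| ≤ K * |x - z.1| → M * |z.2 - c| ≤ M * (K * |x - z.1|) :=
    fun h => mul_le_mul_of_nonneg_left h M.2
  have hlez := hφle z.1 hzR.1
  refine ⟨x, hx, hne, ?_⟩
  rcases hgr with h | h
  · have hmem : (x, z.2) ∈ graphRegion a b φ₁ φ₂ := ⟨hxI, h.le, h ▸ hle⟩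
    have hmem' : (z.1, φ₁ z.1) ∈ graphRegion a b φ₁ φ₂ := ⟨hzR.1, le_rfl, hlez⟩
    refine ⟨hmem, zero _ hmem (Or.inl h), (vert _ hmem' (zero _ hmem' (Or.inl rfl))).trans ?_⟩
    exact hleM (h ▸ h₁.dist_le_mul x hxI z.1 hzR.1)
  · have hmem : (x, z.2) ∈ graphRegion a b φ₁ φ₂ := ⟨hxI, h ▸ hle, h.ge⟩
    have hmem' : (z.1, φ₂ z.1) ∈ graphRegion a b φ₁ φ₂ := ⟨hzR.1, hlez, le_rfl⟩
    refine ⟨hmem, zero _ hmem (Or.inr h), (vert _ hmem' (zero _ hmem' (Or.inr rfl))).trans ?_⟩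
    exact hleM (h ▸ h₂.dist_le_mul x hxI z.1 hzR.1)

theorem MemU.abs_ux_le (hab : a < b) (hφle : ∀ x ∈ Icc a b, φ₁ x ≤ φ₂ x) {K : ℝ≥0}
    (h₁ : LipschitzOnWith K φ₁ (Icc a b)) (h₂ : LipschitzOnWith K φ₂ (Icc a b))
    (heqa : φ₁ a = φ₂ a) (heqb : φ₁ b = φ₂ b)
    {u : ℝ × ℝ → ℝ} (hu : MemU (graphRegion a b φ₁ φ₂) u) {M : ℝ≥0}
    (hM : ∀ᵐ z ∂volume.restrict (graphRegion a b φ₁ φ₂), |uy u z| ≤ M) {z : ℝ × ℝ}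
    (hz : z ∈ interior (graphRegion a b φ₁ φ₂)) : |ux u z| ≤ K * M := by
  by_cases hd : DifferentiableAt ℝ u z
  swap
  · rw [ux, fderiv_zero_of_not_differentiableAt hd]
    simpa using mul_nonneg K.2 M.2
  have hzR := interior_subset hz
  have tangent : ∀ x, (x, z.2) ∈ graphRegion a b φ₁ φ₂ →
      u (x, z.2) ≤ u z + (x - z.1) * ux u z := by
    intro x hx
    have h := hu.2.1.le_add_of_hasFDerivAt hzR hx hd.hasFDerivAt
    have hv : (x, z.2) - z = (x - z.1) • ((1, 0) : ℝ × ℝ) := by ext <;> simp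
    rwa [hv, map_smul, smul_eq_mul] at h
  rw [abs_le]
  constructor
  · obtain ⟨x, hx, hne, hmem, hx0, hle⟩ :=
      hu.exists_horizontal_zero hφle h₁ h₂ hM (right_mem_Icc.2 hab.le) heqb hz
    rw [uIcc_of_ge hzR.1.2] at hx
    have hpos : 0 < x - z.1 := sub_pos.2 (lt_of_le_of_ne hx.1 hne.symm)
    have ht := tangent x hmem
    rw [abs_of_pos hpos] at hle
    by_contra! hcon
    nlinarith
  · obtain ⟨x, hx, hne, hmem, hx0, hle⟩ :=
      hu.exists_horizontal_zero hφle h₁ h₂ hM (left_mem_Icc.2 hab.le) heqa hz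
    rw [uIcc_of_le hzR.1.1] at hx
    have hneg : x - z.1 < 0 := sub_neg.2 (lt_of_le_of_ne hx.2 hne)
    have ht := tangent x hmem
    rw [abs_of_neg hneg] at hle
    by_contra! hcon
    nlinarith

/-- The smaller of the vertical distances to the two bounding graphs. -/
noncomputable def verticalDist (φ₁ φ₂ : ℝ → ℝ) (z : ℝ × ℝ) : ℝ :=
  min (φ₂ z.1 - z.2) (z.2 - φ₁ z.1)

theorem lipschitzOnWith_verticalDist {K : ℝ≥0} (h₁ : LipschitzOnWith K φ₁ (Icc a b))
    (h₂ : LipschitzOnWith K φ₂ (Icc a b)) :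
    LipschitzOnWith (K + 1) (verticalDist φ₁ φ₂) (graphRegion a b φ₁ φ₂) := by
  refine LipschitzOnWith.of_dist_le_mul fun z hz w hw => ?_
  have e₁ : dist z.1 w.1 ≤ dist z w := by rw [Prod.dist_eq]; exact le_max_left _ _
  have e₂ : dist z.2 w.2 ≤ dist z w := by rw [Prod.dist_eq]; exact le_max_right _ _
  have l₁ := (h₁.dist_le_mul z.1 hz.1 w.1 hw.1).trans (mul_le_mul_of_nonneg_left e₁ K.2)
  have l₂ := (h₂.dist_le_mul z.1 hz.1 w.1 hw.1).trans (mul_le_mul_of_nonneg_left e₁ K.2)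
  rw [Real.dist_eq] at l₁ l₂ e₂
  rw [Real.dist_eq, NNReal.coe_add, NNReal.coe_one, add_mul, one_mul]
  refine (abs_min_sub_min_le_max _ _ _ _).trans (max_le ?_ ?_)
  · have := abs_sub (φ₂ z.1 - φ₂ w.1) (z.2 - w.2)
    rw [show φ₂ z.1 - z.2 - (φ₂ w.1 - w.2) = (φ₂ z.1 - φ₂ w.1) - (z.2 - w.2) by ring]
    linarith
  · have := abs_sub (z.2 - w.2) (φ₁ z.1 - φ₁ w.1)
    rw [show z.2 - φ₁ z.1 - (w.2 - φ₁ w.1) = (z.2 - w.2) - (φ₁ z.1 - φ₁ w.1) by ring]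
    linarith

theorem concaveOn_verticalDist (hφ₁ : ConvexOn ℝ (Icc a b) φ₁)
    (hφ₂ : ConcaveOn ℝ (Icc a b) φ₂) :
    ConcaveOn ℝ (graphRegion a b φ₁ φ₂) (verticalDist φ₁ φ₂) := by
  have hR := convex_graphRegion hφ₁ hφ₂
  refine ConcaveOn.inf (f := fun z : ℝ × ℝ => φ₂ z.1 - z.2) (g := fun z => z.2 - φ₁ z.1)
    ⟨hR, fun z hz w hw s t hs ht hst => ?_⟩ ⟨hR, fun z hz w hw s t hs ht hst => ?_⟩
  · have h := hφ₂.2 hz.1 hw.1 hs ht hst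
    simp only [smul_eq_mul, Prod.fst_add, Prod.snd_add, Prod.smul_fst, Prod.smul_snd] at h ⊢
    linarith
  · have h := hφ₁.2 hz.1 hw.1 hs ht hst
    simp only [smul_eq_mul, Prod.fst_add, Prod.snd_add, Prod.smul_fst, Prod.smul_snd] at h ⊢
    linarith

theorem memU_verticalDist (hφ₁ : ConvexOn ℝ (Icc a b) φ₁) (hφ₂ : ConcaveOn ℝ (Icc a b) φ₂)
    {K : ℝ≥0} (h₁ : LipschitzOnWith K φ₁ (Icc a b)) (h₂ : LipschitzOnWith K φ₂ (Icc a b))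
    (heqa : φ₁ a = φ₂ a) (heqb : φ₁ b = φ₂ b) (hcl : IsClosed (graphRegion a b φ₁ φ₂)) :
    MemU (graphRegion a b φ₁ φ₂) (verticalDist φ₁ φ₂) := by
  have hL := lipschitzOnWith_verticalDist h₁ h₂
  refine ⟨hL.continuousOn, concaveOn_verticalDist hφ₁ hφ₂, fun z hz => ?_, K + 1,
    fun z hz g hg => hg.le_of_lipschitzOn (mem_interior_iff_mem_nhds.1 hz) hL⟩
  obtain ⟨⟨hza, hzb⟩, hz₁, hz₂⟩ : z ∈ graphRegion a b φ₁ φ₂ := hcl.frontier_subset hz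
  by_contra hne
  have hnn : 0 ≤ verticalDist φ₁ φ₂ z := le_min (sub_nonneg.2 hz₂) (sub_nonneg.2 hz₁)
  obtain ⟨hp₂, hp₁⟩ := lt_min_iff.1 (lt_of_le_of_ne hnn (Ne.symm hne))
  have hxa : z.1 ≠ a := fun h => by rw [h] at hp₁ hp₂; linarith
  have hxb : z.1 ≠ b := fun h => by rw [h] at hp₁ hp₂; linarith
  exact hz.2 (mem_interior_graphRegion h₁.continuousOn h₂.continuousOn
    ⟨lt_of_le_of_ne hza hxa.symm, lt_of_le_of_ne hzb hxb⟩ (sub_pos.1 hp₁) (sub_pos.1 hp₂))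

theorem abs_uy_verticalDist_le (z : ℝ × ℝ) : |uy (verticalDist φ₁ φ₂) z| ≤ 1 := by
  by_cases hd : DifferentiableAt ℝ (verticalDist φ₁ φ₂) z
  swap
  · rw [uy, fderiv_zero_of_not_differentiableAt hd]
    simp
  have hline : HasDerivAt (fun y : ℝ => (z.1, y)) ((0, 1) : ℝ × ℝ) z.2 :=
    (hasDerivAt_const z.2 z.1).prodMk (hasDerivAt_id z.2)
  have hder : HasDerivAt (fun y => verticalDist φ₁ φ₂ (z.1, y)) (uy (verticalDist φ₁ φ₂) z) z.2 :=
    HasFDerivAt.comp_hasDerivAt z.2 (f := fun y : ℝ => (z.1, y)) hd.hasFDerivAt hline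
  have hL : LipschitzWith 1 fun y => verticalDist φ₁ φ₂ (z.1, y) := by
    refine LipschitzWith.of_dist_le_mul fun y w => ?_
    rw [Real.dist_eq, Real.dist_eq, NNReal.coe_one, one_mul]
    refine (abs_min_sub_min_le_max _ _ _ _).trans (max_le ?_ ?_)
    · rw [sub_sub_sub_cancel_left, abs_sub_comm]
    · rw [sub_sub_sub_cancel_right]
  simpa using hder.le_of_lipschitz hL

/-- An a.e. bound on `ux` bounds the horizontal increments between interior points. -/
theorem ConcaveOn.abs_sub_le_of_ae_abs_ux_le {s : Set (ℝ × ℝ)} {u : ℝ × ℝ → ℝ}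
    (hu : ConcaveOn ℝ s u) (hc : ContinuousOn u s) {N : ℝ}
    (hN : ∀ᵐ z ∂volume.restrict s, |ux u z| ≤ N) {x x' y : ℝ}
    (hx : (x, y) ∈ interior s) (hx' : (x', y) ∈ interior s) :
    |u (x', y) - u (x, y)| ≤ N * |x' - x| := by
  have key : ∀ {p q : ℝ}, (p, y) ∈ interior s → (q, y) ∈ interior s →
      u (q, y) ≤ u (p, y) + N * |q - p| := by
    intro p q hp hq
    have he : (p, y) + (q - p) • ((1, 0) : ℝ × ℝ) = (q, y) := by ext <;> simp
    have h := hu.le_add_of_ae_abs_fderiv_le hc hN (interior_subset hp) (t := q - p) (by rwa [he])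
    rwa [he] at h
  have h1 := key hx hx'
  have h2 := key hx' hx
  rw [abs_sub_comm x x'] at h2
  rw [abs_le]
  constructor <;> linarith

/-- A bound on the horizontal derivative of `verticalDist` makes both bounding graphs Lipschitz. -/
theorem lipschitzOnWith_of_ae_abs_ux_verticalDist_le (hab : a < b)
    (hφ₁ : ConvexOn ℝ (Icc a b) φ₁) (hφ₂ : ConcaveOn ℝ (Icc a b) φ₂)
    (hlt : ∀ x ∈ Ioo a b, φ₁ x < φ₂ x) {K : ℝ≥0}
    (h₁ : LipschitzOnWith K φ₁ (Icc a b)) (h₂ : LipschitzOnWith K φ₂ (Icc a b)) {N : ℝ≥0}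
    (hN : ∀ᵐ z ∂volume.restrict (graphRegion a b φ₁ φ₂), |ux (verticalDist φ₁ φ₂) z| ≤ N) :
    LipschitzOnWith N φ₁ (Icc a b) ∧ LipschitzOnWith N (-φ₂) (Icc a b) := by
  have c₁ := h₁.continuousOn
  have c₂ := h₂.continuousOn
  have hinc := fun {x x' y : ℝ} => (concaveOn_verticalDist hφ₁ hφ₂).abs_sub_le_of_ae_abs_ux_le
    (lipschitzOnWith_verticalDist h₁ h₂).continuousOn hN (x := x) (x' := x') (y := y)
  constructor
  · refine hφ₁.lipschitzOnWith_of_eventually_abs_sub_le hab c₁ fun x hx => ?_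
    have hI := Icc_mem_nhds hx.1 hx.2
    have hx12 := hlt x hx
    obtain ⟨y, hy₁, hy₂⟩ : ∃ y, φ₁ x < y ∧ y < (φ₁ x + φ₂ x) / 2 :=
      exists_between (by linarith)
    have near : ∀ᶠ t in 𝓝 x, t ∈ Ioo a b ∧ φ₁ t < y ∧ y < (φ₁ t + φ₂ t) / 2 :=
      (eventually_mem_set.2 (Ioo_mem_nhds hx.1 hx.2)).and <|
        ((c₁.continuousAt hI).eventually_lt continuousAt_const hy₁).and <|
          continuousAt_const.eventually_lt
            (((c₁.continuousAt hI).add (c₂.continuousAt hI)).div_const 2) hy₂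
    have val : ∀ t, y < (φ₁ t + φ₂ t) / 2 → verticalDist φ₁ φ₂ (t, y) = y - φ₁ t :=
      fun t ht => min_eq_right (by dsimp only; linarith)
    have mem : ∀ t, t ∈ Ioo a b ∧ φ₁ t < y ∧ y < (φ₁ t + φ₂ t) / 2 →
        (t, y) ∈ interior (graphRegion a b φ₁ φ₂) := fun t ht =>
      mem_interior_graphRegion c₁ c₂ ht.1 ht.2.1 (by dsimp only; linarith [ht.2.1, ht.2.2])
    filter_upwards [near] with t ht
    have h := hinc (mem x near.self_of_nhds) (mem t ht)
    rwa [val t ht.2.2, val x hy₂, sub_sub_sub_cancel_left, abs_sub_comm] at h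
  · refine hφ₂.neg.lipschitzOnWith_of_eventually_abs_sub_le hab c₂.neg fun x hx => ?_
    have hI := Icc_mem_nhds hx.1 hx.2
    have hx12 := hlt x hx
    obtain ⟨y, hy₁, hy₂⟩ : ∃ y, (φ₁ x + φ₂ x) / 2 < y ∧ y < φ₂ x :=
      exists_between (by linarith)
    have near : ∀ᶠ t in 𝓝 x, t ∈ Ioo a b ∧ (φ₁ t + φ₂ t) / 2 < y ∧ y < φ₂ t :=
      (eventually_mem_set.2 (Ioo_mem_nhds hx.1 hx.2)).and <|
        ((((c₁.continuousAt hI).add (c₂.continuousAt hI)).div_const 2).eventually_lt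
          continuousAt_const hy₁).and <|
          continuousAt_const.eventually_lt (c₂.continuousAt hI) hy₂
    have val : ∀ t, (φ₁ t + φ₂ t) / 2 < y → verticalDist φ₁ φ₂ (t, y) = φ₂ t - y :=
      fun t ht => min_eq_left (by dsimp only; linarith)
    have mem : ∀ t, t ∈ Ioo a b ∧ (φ₁ t + φ₂ t) / 2 < y ∧ y < φ₂ t →
        (t, y) ∈ interior (graphRegion a b φ₁ φ₂) := fun t ht =>
      mem_interior_graphRegion c₁ c₂ ht.1 (by dsimp only; linarith [ht.2.1, ht.2.2]) ht.2.2
    filter_upwards [near] with t ht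
    have h := hinc (mem x near.self_of_nhds) (mem t ht)
    rw [val t ht.2.1, val x hy₁, sub_sub_sub_cancel_right, abs_sub_comm] at h
    simpa [neg_add_eq_sub] using h

/-- The bounding graphs are strictly separated over the open interval. -/
theorem lt_of_nonempty_interior_graphRegion (hφ₁ : ConvexOn ℝ (Icc a b) φ₁)
    (hφ₂ : ConcaveOn ℝ (Icc a b) φ₂) (hφle : ∀ x ∈ Icc a b, φ₁ x ≤ φ₂ x)
    (hne : (interior (graphRegion a b φ₁ φ₂)).Nonempty) {x : ℝ} (hx : x ∈ Ioo a b) :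
    φ₁ x < φ₂ x := by
  obtain ⟨z, hz⟩ := hne
  have hzlt : 0 < (φ₂ - φ₁) z.1 := by
    have := lt_of_mem_interior_graphRegion hz
    exact sub_pos.2 (this.1.trans this.2)
  have hzI := (interior_subset hz).1
  have hc : ConcaveOn ℝ (Icc a b) (φ₂ - φ₁) := hφ₂.sub hφ₁
  have hxI := Ioo_subset_Icc_self hx
  have hnn : ∀ y ∈ Icc a b, 0 ≤ (φ₂ - φ₁) y := fun y hy => sub_nonneg.2 (hφle y hy)
  have hab := hx.1.trans hx.2
  refine sub_pos.1 (?_ : 0 < (φ₂ - φ₁) x)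
  rcases lt_trichotomy x z.1 with h | h | h
  · have h1 := hc.neg.secant_mono_aux1 (left_mem_Icc.2 hab.le) hzI hx.1 h
    have h2 := mul_nonneg (sub_pos.2 h).le (hnn a (left_mem_Icc.2 hab.le))
    have h3 := mul_pos (sub_pos.2 hx.1) hzlt
    simp only [Pi.neg_apply] at h1
    have h4 : 0 < (z.1 - a) * (φ₂ - φ₁) x := by linarith
    exact pos_of_mul_pos_right h4 (by linarith [hx.1])
  · rwa [h]
  · have h1 := hc.neg.secant_mono_aux1 hzI (right_mem_Icc.2 hab.le) h hx.2
    have h2 := mul_nonneg (sub_pos.2 h).le (hnn b (right_mem_Icc.2 hab.le))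
    have h3 := mul_pos (sub_pos.2 hx.2) hzlt
    simp only [Pi.neg_apply] at h1
    have h4 : 0 < (b - z.1) * (φ₂ - φ₁) x := by linarith
    exact pos_of_mul_pos_right h4 (by linarith [hx.2])

end GraphRegion

theorem ae_abs_le_toNNReal_LinfN {Ω : Set (ℝ × ℝ)} {f : ℝ × ℝ → ℝ} (h : LinfN Ω f ≠ ⊤) :
    ∀ᵐ z ∂volume.restrict Ω, |f z| ≤ (LinfN Ω f).toNNReal := by
  filter_upwards [ENNReal.ae_le_essSup (μ := volume.restrict Ω)
    fun z => ENNReal.ofReal |f z|] with z hz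
  exact (ENNReal.ofReal_le_iff_le_toReal h).1 hz

theorem LinfN_le_of_abs_le {Ω : Set (ℝ × ℝ)} (hΩ : Convex ℝ Ω) {f : ℝ × ℝ → ℝ} {C : ℝ}
    (h : ∀ z ∈ interior Ω, |f z| ≤ C) : LinfN Ω f ≤ ENNReal.ofReal C := by
  refine essSup_le_of_ae_le _ ?_
  rw [← Measure.restrict_congr_set (interior_ae_eq_of_null_frontier (hΩ.addHaar_frontier volume))]
  filter_upwards [ae_restrict_mem isOpen_interior.measurableSet] with z hz
  exact ENNReal.ofReal_le_ofReal (h z hz)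

/-- Theorem 8, finite case: if both vertical lines of support of `Ω` are
angular, with `m` the largest modulus of the four one-sided derivatives of `φ₁, φ₂` at
the endpoints, then `K_∞(Ω) = m`: `‖u_x‖_∞ ≤ m ‖u_y‖_∞` for every `u ∈ 𝒰_Ω`, and for
every `ε > 0` there is a nonzero `u ∈ 𝒰_Ω` with `(m - ε) ‖u_y‖_∞ ≤ ‖u_x‖_∞`. -/
theorem stmt_18 (a b : ℝ) (hab : a < b) (φ₁ φ₂ : ℝ → ℝ)
    (hφ₁ : ConvexOn ℝ (Icc a b) φ₁) (hφ₂ : ConcaveOn ℝ (Icc a b) φ₂)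
    (hφle : ∀ x ∈ Icc a b, φ₁ x ≤ φ₂ x)
    (Ω : Set (ℝ × ℝ))
    (hΩ : Ω = {z : ℝ × ℝ | z.1 ∈ Icc a b ∧ z.2 ∈ Icc (φ₁ z.1) (φ₂ z.1)})
    (hΩc : IsCompact Ω) (hΩint : (interior Ω).Nonempty)
    (heqa : φ₁ a = φ₂ a) (heqb : φ₁ b = φ₂ b)
    (d1a d2a d1b d2b : ℝ)
    (h1a : HasDerivWithinAt φ₁ d1a (Ici a) a) (h2a : HasDerivWithinAt φ₂ d2a (Ici a) a)
    (h1b : HasDerivWithinAt φ₁ d1b (Iic b) b) (h2b : HasDerivWithinAt φ₂ d2b (Iic b) b)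
    (m : ℝ) (hm : m = max (max |d1a| |d2a|) (max |d1b| |d2b|)) :
    (∀ u : ℝ × ℝ → ℝ, MemU Ω u →
      LinfN Ω (ux u) ≤ ENNReal.ofReal m * LinfN Ω (uy u)) ∧
    (∀ ε > (0 : ℝ), ∃ u : ℝ × ℝ → ℝ, MemU Ω u ∧ (∃ z ∈ Ω, u z ≠ 0) ∧
      ENNReal.ofReal (m - ε) * LinfN Ω (uy u) ≤ LinfN Ω (ux u)) := by
  obtain rfl : Ω = graphRegion a b φ₁ φ₂ := hΩ
  have hm0 : 0 ≤ m := by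
    rw [hm]
    exact (abs_nonneg d1a).trans ((le_max_left _ _).trans (le_max_left _ _))
  lift m to ℝ≥0 using hm0
  have hmax := hm.ge
  simp only [max_le_iff] at hmax
  obtain ⟨⟨hd1a, hd2a⟩, hd1b, hd2b⟩ := hmax
  have h₁ : LipschitzOnWith m φ₁ (Icc a b) :=
    hφ₁.lipschitzOnWith_of_hasDerivWithinAt h1a h1b hd1a hd1b
  have h₂ : LipschitzOnWith m φ₂ (Icc a b) := by
    have h := hφ₂.neg.lipschitzOnWith_of_hasDerivWithinAt h2a.neg h2b.neg
      (by rwa [abs_neg]) (by rwa [abs_neg])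
    simpa using h.neg
  have hR := convex_graphRegion hφ₁ hφ₂
  constructor
  · intro u hu
    obtain ⟨C, hC⟩ := hu.2.2.2
    have hfin : LinfN (graphRegion a b φ₁ φ₂) (uy u) ≠ ⊤ := by
      refine ((LinfN_le_of_abs_le hR (C := max C 0) fun z hz => ?_).trans_lt
        ENNReal.ofReal_lt_top).ne
      by_cases hd : DifferentiableAt ℝ u z
      · refine ((fderiv ℝ u z).le_opNorm (0, 1)).trans ?_
        rw [show ‖((0, 1) : ℝ × ℝ)‖ = 1 by simp [Prod.norm_def], mul_one]
        exact (hC z hz _ hd.hasFDerivAt).trans (le_max_left _ _)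
      · simp [uy, fderiv_zero_of_not_differentiableAt hd]
    refine (LinfN_le_of_abs_le hR fun z hz => hu.abs_ux_le hab hφle h₁ h₂ heqa heqb
      (ae_abs_le_toNNReal_LinfN hfin) hz).trans ?_
    rw [ENNReal.ofReal_mul m.coe_nonneg, ENNReal.ofReal_coe_nnreal (p := (LinfN _ _).toNNReal),
      ENNReal.coe_toNNReal hfin]
  · intro ε hε
    have hlt := fun x => lt_of_nonempty_interior_graphRegion hφ₁ hφ₂ hφle hΩint (x := x)
    refine ⟨verticalDist φ₁ φ₂, memU_verticalDist hφ₁ hφ₂ h₁ h₂ heqa heqb hΩc.isClosed, ?_, ?_⟩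
    · obtain ⟨z, hz⟩ := hΩint
      have hz' := lt_of_mem_interior_graphRegion hz
      exact ⟨z, interior_subset hz, (lt_min (sub_pos.2 hz'.2) (sub_pos.2 hz'.1)).ne'⟩
    have huy : LinfN (graphRegion a b φ₁ φ₂) (uy (verticalDist φ₁ φ₂)) ≤ 1 := by
      simpa using LinfN_le_of_abs_le hR fun z _ => abs_uy_verticalDist_le (φ₁ := φ₁) (φ₂ := φ₂) z
    suffices hux : ENNReal.ofReal m ≤ LinfN (graphRegion a b φ₁ φ₂) (ux (verticalDist φ₁ φ₂)) by
      calc _ ≤ ENNReal.ofReal (m - ε) * 1 := by gcongr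
        _ ≤ ENNReal.ofReal m := by
          rw [mul_one]
          exact ENNReal.ofReal_le_ofReal (by linarith)
        _ ≤ _ := hux
    by_cases hfin : LinfN (graphRegion a b φ₁ φ₂) (ux (verticalDist φ₁ φ₂)) = ⊤
    · rw [hfin]
      exact le_top
    obtain ⟨l₁, l₂⟩ := lipschitzOnWith_of_ae_abs_ux_verticalDist_le hab hφ₁ hφ₂ hlt h₁ h₂
      (ae_abs_le_toNNReal_LinfN hfin)
    have haI := left_mem_Icc.2 hab.le
    have hbI := right_mem_Icc.2 hab.le
    have hna := Icc_mem_nhdsGE hab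
    have hnb := Icc_mem_nhdsLE hab
    have : (𝓝[Ici a \ {a}] a).NeBot := by
      rw [Ici_sdiff_left]
      infer_instance
    have : (𝓝[Iic b \ {b}] b).NeBot := by
      rw [Iic_sdiff_right]
      infer_instance
    rw [ENNReal.ofReal_le_iff_le_toReal hfin, hm]
    refine max_le (max_le ?_ ?_) (max_le ?_ ?_)
    · exact h1a.abs_le_of_lipschitzOnWith l₁ haI hna
    · exact (abs_neg d2a).ge.trans (h2a.neg.abs_le_of_lipschitzOnWith l₂ haI hna)
    · exact h1b.abs_le_of_lipschitzOnWith l₁ hbI hnb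
    · exact (abs_neg d2b).ge.trans (h2b.neg.abs_le_of_lipschitzOnWith l₂ hbI hnb)
end
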